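/- arXiv:1107.4390 — 9 statements merged into one kernel-verified Lean document; each statement's English description precedes it below -/
import Mathlib

section
/- Let T ≥ 1, let A be a T×T real matrix with 0 ≤ A_{rs} < ∞ for all r,s, let γ ≥ 0, and let Σ be the T×T diagonal matrix with diagonal entries Σ_{tt} = σ_t²/N_t satisfying 0 < σ_t²/N_t < ∞ for all t. Then the matrix B = I + (γ/T) Σ L(A) is invertible, i.e. the MTA solution matrix W = (I + (γ/T) Σ L(A))⁻¹ exists. -/
/-!
Constant vectors lie in the kernel of `L(A)`, so every row of `B = I + (γ/T) Σ L(A)` sums to `1`,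
while the off-diagonal entries of `B` are nonpositive. Hence `B` is strictly diagonally dominant,
and Gershgorin's theorem keeps `0` out of its spectrum.
-/

open Matrix BigOperators

/-- Graph Laplacian `L(A) = D - A` where `D` is the diagonal matrix of row sums. -/
noncomputable def graphLaplacian {T : ℕ} (A : Matrix (Fin T) (Fin T) ℝ) :
    Matrix (Fin T) (Fin T) ℝ :=
  Matrix.diagonal (fun t => ∑ s, A t s) - A

theorem isUnit_of_offDiag_nonpos_of_sum_row_pos {n : Type*} [Fintype n] [DecidableEq n]
    {M : Matrix n n ℝ} (hoff : ∀ i j, i ≠ j → M i j ≤ 0) (hsum : ∀ i, 0 < ∑ j, M i j) :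
    IsUnit M := by
  suffices hdom : ∀ i, ∑ j ∈ Finset.univ.erase i, ‖M i j‖ < ‖M i i‖ from
    M.isUnit_iff_isUnit_det.mpr (det_ne_zero_of_sum_row_lt_diag hdom).isUnit
  intro i
  calc ∑ j ∈ Finset.univ.erase i, ‖M i j‖
      = ∑ j ∈ Finset.univ.erase i, -M i j :=
        Finset.sum_congr rfl fun j hj =>
          Real.norm_of_nonpos (hoff i j (Finset.ne_of_mem_erase hj).symm)
    _ = M i i - ∑ j, M i j := by
        rw [Finset.sum_neg_distrib, Finset.sum_erase_eq_sub (Finset.mem_univ i), neg_sub]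
    _ < M i i := sub_lt_self _ (hsum i)
    _ ≤ ‖M i i‖ := Real.le_norm_self _

section graphLaplacian

variable {T : ℕ} (A : Matrix (Fin T) (Fin T) ℝ)

theorem graphLaplacian_apply_ne {r s : Fin T} (hrs : r ≠ s) :
    graphLaplacian A r s = -A r s := by
  rw [graphLaplacian, Matrix.sub_apply, diagonal_apply_ne _ hrs, zero_sub]

theorem sum_graphLaplacian_apply (r : Fin T) : ∑ s, graphLaplacian A r s = 0 := by
  simp only [graphLaplacian, Matrix.sub_apply, diagonal_apply, Finset.sum_sub_distrib,
    Finset.sum_ite_eq, Finset.mem_univ, if_true, sub_self]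

theorem sum_one_add_smul_diagonal_mul_graphLaplacian_apply (c : ℝ) (d : Fin T → ℝ) (r : Fin T) :
    ∑ s, (1 + c • (diagonal d * graphLaplacian A)) r s = 1 := by
  simp only [Matrix.add_apply, one_apply, Matrix.smul_apply, smul_eq_mul, diagonal_mul,
    Finset.sum_add_distrib, Finset.sum_ite_eq, Finset.mem_univ, if_true, ← Finset.mul_sum,
    sum_graphLaplacian_apply, mul_zero, add_zero]

variable {A}

theorem one_add_smul_diagonal_mul_graphLaplacian_apply_nonpos {c : ℝ} (hc : 0 ≤ c)
    {d : Fin T → ℝ} {r s : Fin T} (hd : 0 ≤ d r) (hA : 0 ≤ A r s) (hrs : r ≠ s) :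
    (1 + c • (diagonal d * graphLaplacian A)) r s ≤ 0 := by
  rw [Matrix.add_apply, one_apply_ne hrs, zero_add, Matrix.smul_apply, diagonal_mul,
    graphLaplacian_apply_ne A hrs, smul_eq_mul, mul_neg, mul_neg]
  exact neg_nonpos.mpr (mul_nonneg hc (mul_nonneg hd hA))

theorem mta_solution_matrix_exists_general (hA : ∀ r s, r ≠ s → 0 ≤ A r s)
    {c : ℝ} (hc : 0 ≤ c) {d : Fin T → ℝ} (hd : ∀ t, 0 ≤ d t) :
    IsUnit (1 + c • (diagonal d * graphLaplacian A)) := by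
  refine isUnit_of_offDiag_nonpos_of_sum_row_pos (fun r s hrs => ?_) fun t => ?_
  · exact one_add_smul_diagonal_mul_graphLaplacian_apply_nonpos hc (hd r) (hA r s hrs) hrs
  · rw [sum_one_add_smul_diagonal_mul_graphLaplacian_apply]
    exact one_pos

end graphLaplacian

/-- The MTA solution matrix `W = (I + (γ/T) Σ L(A))⁻¹` exists, i.e. the matrix
`B = I + (γ/T) Σ L(A)` is invertible. -/
theorem mta_solution_matrix_exists (T : ℕ) (hT : 1 ≤ T)
    (A : Matrix (Fin T) (Fin T) ℝ) (hA : ∀ r s, 0 ≤ A r s)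
    (γ : ℝ) (hγ : 0 ≤ γ)
    (σ : Fin T → ℝ) (N : Fin T → ℕ)
    (hSig : ∀ t, 0 < σ t ^ 2 / (N t : ℝ)) :
    IsUnit ((1 : Matrix (Fin T) (Fin T) ℝ) +
      (γ / (T : ℝ)) •
        (Matrix.diagonal (fun t => σ t ^ 2 / (N t : ℝ)) * graphLaplacian A)) :=
  mta_solution_matrix_exists_general (fun r s _ => hA r s) (by positivity)
    fun t => (hSig t).le
end

section
/- Let T ≥ 1, let A be a T×T real matrix with nonnegative entries, let γ ≥ 0, and let Σ be the T×T diagonal matrix with positive diagonal entries Σ_{tt} = σ_t²/N_t. Then the MTA solution matrix W = (I + (γ/T) Σ L(A))⁻¹ has all entries nonnegative, i.e. W_{rs} ≥ 0 for all r,s. -/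
open Matrix BigOperators

/-!
The matrix `1 + Σ L(A)` has nonpositive off-diagonal entries and, since `L(A)` kills constant
vectors, all its row sums are `1`. For such a matrix `M` and an index `r` at which `x` is minimal,
`(M x) r` is at most the `r`-th row sum times `x r`, so `M x ≥ 0` forces `x r ≥ 0` and hence
`x ≥ 0`. This implication makes `M` injective and, applied to the columns of `M * M⁻¹ = 1`, gives
`M⁻¹ ≥ 0`.
-/

/-- Monotone matrices in the sense of Collatz, the order-theoretic form of having a nonnegative
inverse: `M x ≥ 0` implies `x ≥ 0`. The order on vectors is entrywise, and `M` may be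
rectangular. -/
def IsMonotoneMatrix {m n R : Type*} [Fintype n] [NonUnitalNonAssocSemiring R] [LE R]
    (M : Matrix m n R) : Prop :=
  ∀ ⦃x : n → R⦄, 0 ≤ M *ᵥ x → 0 ≤ x

namespace IsMonotoneMatrix

theorem nonneg_of_mul_nonneg {m n p R : Type*} [Fintype n] [NonUnitalNonAssocSemiring R] [LE R]
    {M : Matrix m n R} (hM : IsMonotoneMatrix M) {B : Matrix n p R}
    (hMB : ∀ i j, 0 ≤ (M * B) i j) (i : n) (j : p) : 0 ≤ B i j :=
  hM (x := fun k => B k j) (fun k => hMB k j) i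

theorem le_of_mulVec_le_mulVec {m n R : Type*} [Fintype n] [NonUnitalNonAssocRing R]
    [PartialOrder R] [IsOrderedAddMonoid R] {M : Matrix m n R} (hM : IsMonotoneMatrix M)
    {x y : n → R} (hxy : M *ᵥ x ≤ M *ᵥ y) : x ≤ y :=
  sub_nonneg.mp <| hM <| by rwa [mulVec_sub, sub_nonneg]

theorem mulVec_injective {m n R : Type*} [Fintype n] [NonUnitalNonAssocRing R]
    [PartialOrder R] [IsOrderedAddMonoid R] {M : Matrix m n R} (hM : IsMonotoneMatrix M) :
    Function.Injective M.mulVec := fun _ _ hxy =>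
  le_antisymm (hM.le_of_mulVec_le_mulVec hxy.le) (hM.le_of_mulVec_le_mulVec hxy.ge)

section Field

variable {n K : Type*} [Fintype n] [DecidableEq n] [Field K] [PartialOrder K] {M : Matrix n n K}

theorem isUnit [IsOrderedAddMonoid K] (hM : IsMonotoneMatrix M) : IsUnit M :=
  mulVec_injective_iff_isUnit.mp hM.mulVec_injective

theorem inv_nonneg [IsOrderedRing K] (hM : IsMonotoneMatrix M) : ∀ i j, 0 ≤ M⁻¹ i j := by
  refine hM.nonneg_of_mul_nonneg fun i j => ?_
  rw [mul_nonsing_inv M ((isUnit_iff_isUnit_det M).mp hM.isUnit), one_apply]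
  split_ifs
  exacts [zero_le_one, le_rfl]

end Field

end IsMonotoneMatrix

theorem isMonotoneMatrix_of_offDiag_nonpos_of_rowSum_pos {n R : Type*} [Fintype n] [Ring R]
    [LinearOrder R] [IsStrictOrderedRing R] {M : Matrix n n R}
    (hoff : ∀ i j, i ≠ j → M i j ≤ 0) (hrow : ∀ i, 0 < ∑ j, M i j) : IsMonotoneMatrix M := by
  intro x hx i
  obtain ⟨r, -, hmin⟩ := Finset.exists_min_image Finset.univ x ⟨i, Finset.mem_univ i⟩
  have hterm (j : n) : M r j * x j ≤ M r j * x r := by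
    rcases eq_or_ne r j with rfl | hrj
    · exact le_rfl
    · exact mul_le_mul_of_nonpos_left (hmin j (Finset.mem_univ j)) (hoff r j hrj)
  have hrow_mul : 0 ≤ (∑ j, M r j) * x r :=
    calc
      0 ≤ ∑ j, M r j * x j := hx r
      _ ≤ ∑ j, M r j * x r := Finset.sum_le_sum fun j _ => hterm j
      _ = (∑ j, M r j) * x r := (Finset.sum_mul _ _ _).symm
  exact (nonneg_of_mul_nonneg_right hrow_mul (hrow r)).trans (hmin i (Finset.mem_univ i))

/-- The Laplacian `D - A` of a weighted directed graph, with `D` the diagonal matrix of row sums of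
`A`, for any finite vertex type and any additive group of weights; `graphLaplacian` is the case of
`Fin T` and `ℝ`. -/
def weightedLaplacian {n R : Type*} [Fintype n] [DecidableEq n] [AddCommGroup R]
    (A : Matrix n n R) : Matrix n n R :=
  diagonal (fun t => ∑ s, A t s) - A

theorem weightedLaplacian_apply_of_ne {n R : Type*} [Fintype n] [DecidableEq n] [AddCommGroup R]
    (A : Matrix n n R) {i j : n} (hij : i ≠ j) : weightedLaplacian A i j = -A i j := by
  simp [weightedLaplacian, hij]

theorem sum_weightedLaplacian_apply {n R : Type*} [Fintype n] [DecidableEq n] [AddCommGroup R]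
    (A : Matrix n n R) (i : n) : ∑ j, weightedLaplacian A i j = 0 := by
  simp [weightedLaplacian, diagonal_apply]

theorem isMonotoneMatrix_one_add_diagonal_mul_weightedLaplacian {n R : Type*} [Fintype n]
    [DecidableEq n] [Ring R] [LinearOrder R] [IsStrictOrderedRing R] {A : Matrix n n R}
    (hA : ∀ i j, i ≠ j → 0 ≤ A i j) {d : n → R} (hd : ∀ i, 0 ≤ d i) :
    IsMonotoneMatrix (1 + diagonal d * weightedLaplacian A) := by
  apply isMonotoneMatrix_of_offDiag_nonpos_of_rowSum_pos
  · intro i j hij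
    have hentry : (1 + diagonal d * weightedLaplacian A) i j = -(d i * A i j) := by
      simp [weightedLaplacian_apply_of_ne A hij, hij]
    rw [hentry]
    exact neg_nonpos.mpr (mul_nonneg (hd i) (hA i j hij))
  · intro i
    have hsum : ∑ j, (1 + diagonal d * weightedLaplacian A) i j = 1 := by
      simp [Finset.sum_add_distrib, ← Finset.mul_sum, sum_weightedLaplacian_apply, one_apply]
    rw [hsum]
    exact zero_lt_one

theorem mta_solution_matrix_nonneg_general {n K : Type*} [Fintype n] [DecidableEq n] [Field K]
    [LinearOrder K] [IsStrictOrderedRing K] {A : Matrix n n K}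
    (hA : ∀ r s, r ≠ s → 0 ≤ A r s) {d : n → K} (hd : ∀ t, 0 ≤ d t) :
    IsUnit (1 + diagonal d * weightedLaplacian A) ∧
      ∀ r s, 0 ≤ (1 + diagonal d * weightedLaplacian A)⁻¹ r s :=
  have hmono := isMonotoneMatrix_one_add_diagonal_mul_weightedLaplacian hA hd
  ⟨hmono.isUnit, hmono.inv_nonneg⟩

/-- The MTA solution matrix `W = (I + (γ/T) Σ L(A))⁻¹` exists and has all
entries nonnegative. -/
theorem mta_solution_matrix_nonneg (T : ℕ) (hT : 1 ≤ T)
    (A : Matrix (Fin T) (Fin T) ℝ) (hA : ∀ r s, 0 ≤ A r s)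
    (γ : ℝ) (hγ : 0 ≤ γ)
    (σ : Fin T → ℝ) (N : Fin T → ℕ)
    (hSig : ∀ t, 0 < σ t ^ 2 / (N t : ℝ)) :
    IsUnit ((1 : Matrix (Fin T) (Fin T) ℝ) +
      (γ / (T : ℝ)) •
        (Matrix.diagonal (fun t => σ t ^ 2 / (N t : ℝ)) * graphLaplacian A)) ∧
    ∀ r s : Fin T,
      0 ≤ ((1 : Matrix (Fin T) (Fin T) ℝ) +
        (γ / (T : ℝ)) •
          (Matrix.diagonal (fun t => σ t ^ 2 / (N t : ℝ)) * graphLaplacian A))⁻¹ r s := by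
  rw [← smul_mul, ← diagonal_smul]
  exact mta_solution_matrix_nonneg_general (fun r s _ => hA r s)
    fun t => mul_nonneg (div_nonneg hγ T.cast_nonneg) (hSig t).le
end

section
/- Let T ≥ 1, let A be a T×T real matrix with 0 ≤ A_{rs} < ∞ for all r,s, let γ ≥ 0, and let Σ be the T×T diagonal matrix with 0 < Σ_{tt} = σ_t²/N_t < ∞ for all t. Then the MTA solution matrix W = (I + (γ/T) Σ L(A))⁻¹ is right-stochastic: all its entries are nonnegative and each row sums to 1. Consequently, for any vector Ȳ ∈ ℝ^T of task sample averages, each MTA estimate Y*_t = Σ_{r=1}^T W_{tr} Ȳ_r is a convex combination of the sample averages Ȳ_1, …, Ȳ_T. -/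
open Matrix BigOperators

/-!
The matrix `M = I + (γ/T) Σ L(A)` has nonpositive off-diagonal entries and fixes the all-ones
vector. Such a matrix obeys a minimum principle: `0 ≤ M x` implies `0 ≤ x`, as one sees by looking
at a coordinate where `x` is minimal. Hence `M` is injective, so invertible; `M` maps the columns of
`M⁻¹` to the standard basis vectors, so they are nonnegative; and `M⁻¹` fixes the all-ones vector
because `M` does.
-/

section ZMatrix

variable {n R : Type*}

/-- A Z-matrix: a square matrix whose off-diagonal entries are all nonpositive. Together with a
vector `v ≥ 0` such that `M v > 0`, this is what makes `M` a nonsingular M-matrix, that is, one with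
an entrywise nonnegative inverse. -/
def IsZMatrix [Zero R] [LE R] (M : Matrix n n R) : Prop :=
  Pairwise fun i j => M i j ≤ 0

namespace IsZMatrix

section OrderedSemiring

variable [Semiring R] [PartialOrder R]

theorem one [DecidableEq n] : IsZMatrix (1 : Matrix n n R) :=
  fun _ _ hij => (one_apply_ne hij).le

variable [IsOrderedRing R] {M N : Matrix n n R}

theorem add (hM : IsZMatrix M) (hN : IsZMatrix N) : IsZMatrix (M + N) :=
  fun _ _ hij => add_nonpos (hM hij) (hN hij)

theorem smul (hM : IsZMatrix M) {c : R} (hc : 0 ≤ c) : IsZMatrix (c • M) :=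
  fun _ _ hij => mul_nonpos_of_nonneg_of_nonpos hc (hM hij)

variable [Fintype n]

theorem diagonal_mul [DecidableEq n] (hM : IsZMatrix M) {d : n → R} (hd : 0 ≤ d) :
    IsZMatrix (diagonal d * M) := by
  intro i j hij
  rw [Matrix.diagonal_mul]
  exact mul_nonpos_of_nonneg_of_nonpos (hd i) (hM hij)

theorem mulVec_apply_nonpos (hM : IsZMatrix M) {y : n → R} (hy : 0 ≤ y) {i : n} (hi : y i = 0) :
    (M *ᵥ y) i ≤ 0 := by
  refine Finset.sum_nonpos fun j _ => ?_
  obtain rfl | hij := eq_or_ne i j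
  · rw [hi, mul_zero]
  · exact mul_nonpos_of_nonpos_of_nonneg (hM hij) (hy j)

theorem pos_of_mulVec_pos (hM : IsZMatrix M) {v : n → R} (hv : 0 ≤ v)
    (hMv : ∀ i, 0 < (M *ᵥ v) i) (i : n) : 0 < v i :=
  (hv i).lt_of_ne' fun hi => (hMv i).not_ge (hM.mulVec_apply_nonpos hv hi)

end OrderedSemiring

variable [Fintype n] [Field R] [LinearOrder R] [IsStrictOrderedRing R] {M : Matrix n n R}
  {v : n → R}

theorem nonneg_of_mulVec_nonneg (hM : IsZMatrix M) (hv : 0 ≤ v) (hMv : ∀ i, 0 < (M *ᵥ v) i)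
    {x : n → R} (hx : 0 ≤ M *ᵥ x) : 0 ≤ x := by
  intro i
  have hvpos := hM.pos_of_mulVec_pos hv hMv
  have : Nonempty n := ⟨i⟩
  obtain ⟨k, hk⟩ := Finite.exists_min fun j => x j / v j
  set r := x k / v k
  have hle : ∀ j, r * v j ≤ x j := fun j => (le_div_iff₀ (hvpos j)).mp (hk j)
  -- `x - r • v` is nonnegative and vanishes at `k`, so `0 ≤ (M x) k ≤ r * (M v) k`.
  have hdiff : (M *ᵥ (x - r • v)) k ≤ 0 :=
    hM.mulVec_apply_nonpos (fun j => sub_nonneg.mpr (hle j))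
      (sub_eq_zero.mpr (div_mul_cancel₀ _ (hvpos k).ne').symm)
  have hrMv : 0 ≤ r * (M *ᵥ v) k := by
    rw [mulVec_sub, mulVec_smul] at hdiff
    exact (hx k).trans (sub_nonpos.mp hdiff)
  have hr_nonneg : 0 ≤ r := nonneg_of_mul_nonneg_left hrMv (hMv k)
  exact (mul_nonneg hr_nonneg (hv i)).trans (hle i)

variable [DecidableEq n]

theorem isUnit_of_mulVec_pos (hM : IsZMatrix M) (hv : 0 ≤ v) (hMv : ∀ i, 0 < (M *ᵥ v) i) :
    IsUnit M := by
  have le_of_mulVec_eq {x y : n → R} (hxy : M *ᵥ x = M *ᵥ y) : y ≤ x :=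
    sub_nonneg.mp <| hM.nonneg_of_mulVec_nonneg hv hMv (by rw [mulVec_sub, hxy, sub_self])
  exact mulVec_injective_iff_isUnit.mp fun _ _ hxy =>
    le_antisymm (le_of_mulVec_eq hxy.symm) (le_of_mulVec_eq hxy)

theorem inv_apply_nonneg (hM : IsZMatrix M) (hv : 0 ≤ v) (hMv : ∀ i, 0 < (M *ᵥ v) i) (i j : n) :
    0 ≤ M⁻¹ i j := by
  have hdet := (isUnit_iff_isUnit_det M).mp (hM.isUnit_of_mulVec_pos hv hMv)
  have hcol : 0 ≤ M⁻¹ *ᵥ Pi.single j 1 := by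
    refine hM.nonneg_of_mulVec_nonneg hv hMv ?_
    rw [mulVec_mulVec, mul_nonsing_inv M hdet, one_mulVec]
    exact Pi.single_nonneg.mpr zero_le_one
  rw [mulVec_single_one] at hcol
  exact hcol i

theorem inv_mem_rowStochastic (hM : IsZMatrix M) (hone : M *ᵥ 1 = 1) :
    M⁻¹ ∈ rowStochastic R n := by
  have hpos : ∀ i, 0 < (M *ᵥ 1) i := fun i => by
    rw [hone]
    exact zero_lt_one
  have hdet := (isUnit_iff_isUnit_det M).mp (hM.isUnit_of_mulVec_pos zero_le_one hpos)
  refine mem_rowStochastic.mpr ⟨hM.inv_apply_nonneg zero_le_one hpos, ?_⟩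
  calc M⁻¹ *ᵥ 1 = M⁻¹ *ᵥ (M *ᵥ 1) := by rw [hone]
    _ = 1 := by rw [mulVec_mulVec, nonsing_inv_mul M hdet, one_mulVec]

end IsZMatrix

end ZMatrix

section GraphLaplacian

variable {T : ℕ} {A : Matrix (Fin T) (Fin T) ℝ}

theorem isZMatrix_graphLaplacian (hA : Pairwise fun r s => 0 ≤ A r s) :
    IsZMatrix (graphLaplacian A) := by
  intro r s hrs
  rw [graphLaplacian, Matrix.sub_apply, diagonal_apply_ne _ hrs, zero_sub]
  exact neg_nonpos.mpr (hA hrs)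

theorem graphLaplacian_mulVec_one (A : Matrix (Fin T) (Fin T) ℝ) : graphLaplacian A *ᵥ 1 = 0 := by
  ext t
  rw [graphLaplacian, sub_mulVec, Pi.sub_apply, mulVec_diagonal, Pi.one_apply, mul_one,
    mulVec_apply_eq_sum]
  simp

theorem inv_one_add_smul_diagonal_mul_graphLaplacian_mem_rowStochastic
    (hA : Pairwise fun r s => 0 ≤ A r s) {c : ℝ} (hc : 0 ≤ c) {d : Fin T → ℝ} (hd : 0 ≤ d) :
    (1 + c • (diagonal d * graphLaplacian A))⁻¹ ∈ rowStochastic ℝ (Fin T) := by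
  refine (IsZMatrix.one.add
    (((isZMatrix_graphLaplacian hA).diagonal_mul hd).smul hc)).inv_mem_rowStochastic ?_
  rw [add_mulVec, one_mulVec, smul_mulVec, ← mulVec_mulVec, graphLaplacian_mulVec_one,
    mulVec_zero, smul_zero, add_zero]

end GraphLaplacian

/-- The MTA solution matrix `W = (I + (γ/T) Σ L(A))⁻¹` is right-stochastic:
entries nonnegative, rows summing to 1.  Consequently each MTA estimate
`Y*_t = ∑ r, W t r * Ȳ r` is a convex combination of the sample averages. -/
theorem mta_solution_matrix_right_stochastic (T : ℕ) (hT : 1 ≤ T)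
    (A : Matrix (Fin T) (Fin T) ℝ) (hA : ∀ r s, 0 ≤ A r s)
    (γ : ℝ) (hγ : 0 ≤ γ)
    (σ : Fin T → ℝ) (N : Fin T → ℕ)
    (hSig : ∀ t, 0 < σ t ^ 2 / (N t : ℝ))
    (W : Matrix (Fin T) (Fin T) ℝ)
    (hW : W = ((1 : Matrix (Fin T) (Fin T) ℝ) +
      (γ / (T : ℝ)) •
        (Matrix.diagonal (fun t => σ t ^ 2 / (N t : ℝ)) * graphLaplacian A))⁻¹) :
    (∀ r s : Fin T, 0 ≤ W r s) ∧
    (∀ t : Fin T, ∑ s, W t s = 1) ∧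
    (∀ (Ybar : Fin T → ℝ) (t : Fin T), ∃ w : Fin T → ℝ,
      (∀ r, 0 ≤ w r) ∧ (∑ r, w r = 1) ∧ (∑ r, W t r * Ybar r) = ∑ r, w r * Ybar r) := by
  have hWmem : W ∈ rowStochastic ℝ (Fin T) := by
    rw [hW]
    exact inv_one_add_smul_diagonal_mul_graphLaplacian_mem_rowStochastic (fun r s _ => hA r s)
      (div_nonneg hγ T.cast_nonneg) fun t => (hSig t).le
  obtain ⟨hnonneg, hsum⟩ := mem_rowStochastic_iff_sum.mp hWmem
  exact ⟨hnonneg, hsum, fun _ t => ⟨W t, hnonneg t, hsum t, rfl⟩⟩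
end

section
/- Let Ȳ_1 and Ȳ_2 be independent real random variables with E[Ȳ_1] = μ_1, Var(Ȳ_1) = σ_1²/N_1, E[Ȳ_2] = μ_2 = μ_1 + Δ, and Var(Ȳ_2) = σ_2²/N_2, where σ_1², σ_2² > 0 and N_1, N_2 ≥ 1. With T = 2 and a ≥ 0, define Y*_1 = [(T + (σ_2²/N_2) a) Ȳ_1 + (σ_1²/N_1) a Ȳ_2] / (T + (σ_1²/N_1) a + (σ_2²/N_2) a). Then the mean squared error satisfies E[(Y*_1 − μ_1)²] = (σ_1²/N_1) · [T² + 2T(σ_2²/N_2)a + (σ_1²σ_2²/(N_1 N_2))a² + (σ_2⁴/N_2²)a²] / (T + (σ_1²/N_1)a + (σ_2²/N_2)a)² + Δ² (σ_1⁴/N_1²) a² / (T + (σ_1²/N_1)a + (σ_2²/N_2)a)². -/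
open MeasureTheory ProbabilityTheory

/-!
The mean squared error of an estimator is its variance plus its squared bias. With
`v = Var Y₁`, `w = Var Y₂` and `t = v a / (T + v a + w a)`, the estimate is
`(1 - t) Y₁ + t Y₂`; its bias as an estimator of `E Y₁` is `t Δ`, and its variance is
`(1 - t)² v + t² w` because `Y₁` and `Y₂` are uncorrelated.
-/

section

variable {Ω : Type*} {mΩ : MeasurableSpace Ω} {P : Measure Ω} {X Y : Ω → ℝ}

theorem variance_const_mul_add_const_mul [IsFiniteMeasure P] (hX : MemLp X 2 P) (hY : MemLp Y 2 P)
    (s t : ℝ) :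
    Var[fun ω => s * X ω + t * Y ω; P] =
      s ^ 2 * Var[X; P] + 2 * s * t * cov[X, Y; P] + t ^ 2 * Var[Y; P] := by
  rw [variance_fun_add (hX.const_mul s) (hY.const_mul t), variance_const_mul,
    variance_const_mul, covariance_const_mul_left, covariance_const_mul_right]
  ring

variable [IsProbabilityMeasure P]

theorem integral_sub_const_sq_eq_variance_add_sq (hX : MemLp X 2 P) (c : ℝ) :
    ∫ ω, (X ω - c) ^ 2 ∂P = Var[X; P] + (P[X] - c) ^ 2 := by
  have hvar := variance_eq_sub (hX.sub (memLp_const c))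
  have hmean : ∫ ω, (X ω - c) ∂P = P[X] - c := by
    simp [integral_sub (hX.integrable one_le_two) (integrable_const c)]
  simp only [Pi.sub_def, Pi.pow_def, variance_sub_const hX.aestronglyMeasurable, hmean] at hvar
  linarith

theorem integral_convex_comb_sub_mean_sq (hX : MemLp X 2 P) (hY : MemLp Y 2 P) (t : ℝ) :
    ∫ ω, ((1 - t) * X ω + t * Y ω - P[X]) ^ 2 ∂P =
      (1 - t) ^ 2 * Var[X; P] + 2 * (1 - t) * t * cov[X, Y; P] + t ^ 2 * Var[Y; P] +
        (t * (P[Y] - P[X])) ^ 2 := by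
  have hX' : MemLp (fun ω => (1 - t) * X ω) 2 P := hX.const_mul (1 - t)
  have hY' : MemLp (fun ω => t * Y ω) 2 P := hY.const_mul t
  have hXY : MemLp (fun ω => (1 - t) * X ω + t * Y ω) 2 P := hX'.add hY'
  have hmean : ∫ ω, ((1 - t) * X ω + t * Y ω) ∂P = (1 - t) * P[X] + t * P[Y] := by
    rw [integral_add (hX'.integrable one_le_two) (hY'.integrable one_le_two),
      integral_const_mul, integral_const_mul]
  have hbias : (1 - t) * P[X] + t * P[Y] - P[X] = t * (P[Y] - P[X]) := by ring
  rw [integral_sub_const_sq_eq_variance_add_sq hXY, variance_const_mul_add_const_mul hX hY,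
    hmean, hbias]

theorem mta_two_task_mse_general (hX : MemLp X 2 P) (hY : MemLp Y 2 P) (hXY : cov[X, Y; P] = 0)
    {μ Δ v w T a : ℝ} (hμX : P[X] = μ) (hμY : P[Y] = μ + Δ)
    (hv : Var[X; P] = v) (hw : Var[Y; P] = w) (hD : T + v * a + w * a ≠ 0) :
    ∫ ω, (((T + w * a) * X ω + v * a * Y ω) / (T + v * a + w * a) - μ) ^ 2 ∂P =
      v * ((T ^ 2 + 2 * T * w * a + v * w * a ^ 2 + w ^ 2 * a ^ 2) /
          (T + v * a + w * a) ^ 2) +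
        Δ ^ 2 * v ^ 2 * a ^ 2 / (T + v * a + w * a) ^ 2 := by
  generalize hD_def : T + v * a + w * a = D at hD ⊢
  have hweight : 1 - v * a / D = (T + w * a) / D := by
    rw [one_sub_div hD, ← hD_def, add_right_comm, add_sub_cancel_right]
  calc
    ∫ ω, (((T + w * a) * X ω + v * a * Y ω) / D - μ) ^ 2 ∂P
    _ = ∫ ω, ((1 - v * a / D) * X ω + v * a / D * Y ω - P[X]) ^ 2 ∂P := by
      congr with ω
      rw [hweight, hμX]
      ring
    _ = (1 - v * a / D) ^ 2 * v + (v * a / D) ^ 2 * w + (v * a / D * Δ) ^ 2 := by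
      rw [integral_convex_comb_sub_mean_sq hX hY, hXY, hv, hw, hμX, hμY]
      ring
    _ = _ := by
      rw [hweight]
      ring

end

/-- MSE of the first two-task MTA estimate: with `T = 2` and task-similarity `a`,
`E[(Y*₁ − μ₁)²]` equals the stated closed-form expression. -/
theorem mta_two_task_mse (a : ℝ) (ha : 0 ≤ a)
    {Ω : Type*} [MeasureSpace Ω] [IsProbabilityMeasure (volume : Measure Ω)]
    (Y1 Y2 : Ω → ℝ)
    (hIndep : IndepFun Y1 Y2)
    (hInt1 : Integrable Y1) (hInt2 : Integrable Y2)
    (hSq1 : Integrable (fun ω => Y1 ω ^ 2)) (hSq2 : Integrable (fun ω => Y2 ω ^ 2))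
    (μ1 μ2 Δ : ℝ) (σ1 σ2 : ℝ) (N1 N2 : ℕ)
    (hσ1 : 0 < σ1 ^ 2) (hσ2 : 0 < σ2 ^ 2) (hN1 : 1 ≤ N1) (hN2 : 1 ≤ N2)
    (hμ1 : μ1 = ∫ ω, Y1 ω) (hμ2 : μ2 = ∫ ω, Y2 ω) (hΔ : μ2 = μ1 + Δ)
    (hVar1 : (∫ ω, (Y1 ω - μ1) ^ 2) = σ1 ^ 2 / (N1 : ℝ))
    (hVar2 : (∫ ω, (Y2 ω - μ2) ^ 2) = σ2 ^ 2 / (N2 : ℝ))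
    (T : ℝ) (hT : T = 2)
    (Ystar1 : Ω → ℝ)
    (hYstar1 : Ystar1 = fun ω =>
      ((T + (σ2 ^ 2 / (N2 : ℝ)) * a) * Y1 ω + (σ1 ^ 2 / (N1 : ℝ)) * a * Y2 ω) /
        (T + (σ1 ^ 2 / (N1 : ℝ)) * a + (σ2 ^ 2 / (N2 : ℝ)) * a)) :
    (∫ ω, (Ystar1 ω - μ1) ^ 2) =
      (σ1 ^ 2 / (N1 : ℝ)) *
        ((T ^ 2 + 2 * T * (σ2 ^ 2 / (N2 : ℝ)) * a +
            (σ1 ^ 2 * σ2 ^ 2 / ((N1 : ℝ) * (N2 : ℝ))) * a ^ 2 +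
            (σ2 ^ 4 / (N2 : ℝ) ^ 2) * a ^ 2) /
          (T + (σ1 ^ 2 / (N1 : ℝ)) * a + (σ2 ^ 2 / (N2 : ℝ)) * a) ^ 2) +
      Δ ^ 2 * (σ1 ^ 4 / (N1 : ℝ) ^ 2) * a ^ 2 /
        (T + (σ1 ^ 2 / (N1 : ℝ)) * a + (σ2 ^ 2 / (N2 : ℝ)) * a) ^ 2 := by
  subst hT hYstar1
  have hY1 : MemLp Y1 2 := (memLp_two_iff_integrable_sq hInt1.aestronglyMeasurable).2 hSq1
  have hY2 : MemLp Y2 2 := (memLp_two_iff_integrable_sq hInt2.aestronglyMeasurable).2 hSq2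
  have hv : Var[Y1] = σ1 ^ 2 / N1 := by
    rw [variance_eq_integral hInt1.aemeasurable, ← hμ1, hVar1]
  have hw : Var[Y2] = σ2 ^ 2 / N2 := by
    rw [variance_eq_integral hInt2.aemeasurable, ← hμ2, hVar2]
  have hD : 2 + σ1 ^ 2 / N1 * a + σ2 ^ 2 / N2 * a ≠ 0 := by positivity
  have hmse := mta_two_task_mse_general hY1 hY2 (hIndep.covariance_eq_zero hY1 hY2) hμ1.symm
    (hμ2.symm.trans hΔ) hv hw hD
  exact hmse.trans (by ring)
end

section
/- Let T = 2, a > 0, σ_1², σ_2² > 0, N_1, N_2 ≥ 1, and Δ ∈ ℝ. Define M_1(a) = (σ_1²/N_1) · [T² + 2T(σ_2²/N_2)a + (σ_1²σ_2²/(N_1 N_2))a² + (σ_2⁴/N_2²)a²] / (T + (σ_1²/N_1)a + (σ_2²/N_2)a)² + Δ² (σ_1⁴/N_1²) a² / (T + (σ_1²/N_1)a + (σ_2²/N_2)a)². If Δ² < 4/a + σ_1²/N_1 + σ_2²/N_2, then M_1(a) < σ_1²/N_1. That is, the MTA estimate of the first mean has lower mean squared error than the sample average estimate whenever the squared mean-separation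 Δ² is small compared to 4/a plus the summed variances of the sample means. -/
/-!
The two-task MTA estimate is a weighted average `(1 - w) Ȳ₁ + w Ȳ₂` of the two sample means. Write
`u`, `v` for their variances. Its bias is `w Δ` up to sign and its variance is `(1 - w)² u + w² v`,
so for `w > 0` it beats `Ȳ₁` exactly when `w (u + v + Δ²) < 2 u`. The MTA weight satisfies
`w (T / a + u + v) = u`, which turns this condition into `Δ² < 2 T / a + u + v`.
-/

/-- The mean squared error of `(1 - w) Ȳ₁ + w Ȳ₂` as an estimate of the mean of `Ȳ₁`, for
uncorrelated `Ȳ₁`, `Ȳ₂` with variances `u`, `v` and means at distance `Δ`, encoded by its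
bias-variance decomposition. -/
noncomputable def weightedAverageMSE (u v Δ w : ℝ) : ℝ :=
  (1 - w) ^ 2 * u + w ^ 2 * v + (w * Δ) ^ 2

/-- The weight of the second sample mean in the MTA estimate of the first mean: the off-diagonal
entry in the first row of `(I + T⁻¹ Σ L)⁻¹`, where `Σ = diag(u, v)` and `L = !![a, -a; -a, a]` is
the graph Laplacian of the task similarity `a`. The regularization scale `T` is kept as a real
parameter; it is the number of tasks when `γ = 1`. -/
noncomputable def mtaWeight (T a u v : ℝ) : ℝ :=
  u * a / (T + u * a + v * a)

section

variable {T a u v w Δ : ℝ}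

lemma weightedAverageMSE_lt_iff (hw : 0 < w) :
    weightedAverageMSE u v Δ w < u ↔ w * (u + v + Δ ^ 2) < 2 * u := by
  have gap : u - weightedAverageMSE u v Δ w = w * (2 * u - w * (u + v + Δ ^ 2)) := by
    unfold weightedAverageMSE
    ring
  rw [← sub_pos, gap, mul_pos_iff_of_pos_left hw, sub_pos]

lemma one_sub_mtaWeight (hD : T + u * a + v * a ≠ 0) :
    1 - mtaWeight T a u v = (T + v * a) / (T + u * a + v * a) := by
  rw [mtaWeight, one_sub_div hD]
  ring

lemma mtaWeight_pos (ha : 0 < a) (hu : 0 < u) (hD : 0 < T + u * a + v * a) :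
    0 < mtaWeight T a u v :=
  div_pos (mul_pos hu ha) hD

lemma mtaWeight_mul (ha : a ≠ 0) (hD : T + u * a + v * a ≠ 0) :
    mtaWeight T a u v * (T / a + u + v) = u := by
  have hsum : T / a + u + v = (T + u * a + v * a) / a := by field_simp
  rw [mtaWeight, hsum, div_mul_div_cancel₀ hD, mul_div_cancel_right₀ u ha]

theorem weightedAverageMSE_mtaWeight_lt_iff (ha : 0 < a) (hu : 0 < u)
    (hD : 0 < T + u * a + v * a) :
    weightedAverageMSE u v Δ (mtaWeight T a u v) < u ↔ Δ ^ 2 < 2 * T / a + u + v := by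
  have hw : 0 < mtaWeight T a u v := mtaWeight_pos ha hu hD
  have two_u : 2 * u = mtaWeight T a u v * (2 * (T / a + u + v)) := by
    rw [mul_left_comm, mtaWeight_mul ha.ne' hD.ne']
  rw [weightedAverageMSE_lt_iff hw, two_u, mul_lt_mul_iff_right₀ hw, mul_div_assoc]
  constructor <;> intro h <;> linarith

lemma weightedAverageMSE_mtaWeight (hD : T + u * a + v * a ≠ 0) :
    weightedAverageMSE u v Δ (mtaWeight T a u v) =
      u * ((T ^ 2 + 2 * T * v * a + u * v * a ^ 2 + v ^ 2 * a ^ 2) / (T + u * a + v * a) ^ 2) +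
        Δ ^ 2 * u ^ 2 * a ^ 2 / (T + u * a + v * a) ^ 2 := by
  rw [weightedAverageMSE, one_sub_mtaWeight hD, mtaWeight]
  field_simp
  ring

end

/-- If `Δ² < 4/a + σ₁²/N₁ + σ₂²/N₂`, then the two-task MTA estimate of the first
mean has lower MSE than the single-task sample average: `M₁(a) < σ₁²/N₁`. -/
theorem mta_two_task_mse_improvement (a : ℝ) (ha : 0 < a)
    (σ1 σ2 : ℝ) (hσ1 : 0 < σ1 ^ 2) (hσ2 : 0 < σ2 ^ 2)
    (N1 N2 : ℕ) (hN1 : 1 ≤ N1) (hN2 : 1 ≤ N2)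
    (Δ : ℝ) (T : ℝ) (hT : T = 2)
    (M1 : ℝ)
    (hM1 : M1 =
      (σ1 ^ 2 / (N1 : ℝ)) *
        ((T ^ 2 + 2 * T * (σ2 ^ 2 / (N2 : ℝ)) * a +
            (σ1 ^ 2 * σ2 ^ 2 / ((N1 : ℝ) * (N2 : ℝ))) * a ^ 2 +
            (σ2 ^ 4 / (N2 : ℝ) ^ 2) * a ^ 2) /
          (T + (σ1 ^ 2 / (N1 : ℝ)) * a + (σ2 ^ 2 / (N2 : ℝ)) * a) ^ 2) +
      Δ ^ 2 * (σ1 ^ 4 / (N1 : ℝ) ^ 2) * a ^ 2 /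
        (T + (σ1 ^ 2 / (N1 : ℝ)) * a + (σ2 ^ 2 / (N2 : ℝ)) * a) ^ 2)
    (hΔ : Δ ^ 2 < 4 / a + σ1 ^ 2 / (N1 : ℝ) + σ2 ^ 2 / (N2 : ℝ)) :
    M1 < σ1 ^ 2 / (N1 : ℝ) := by
  subst hT
  set u := σ1 ^ 2 / (N1 : ℝ)
  set v := σ2 ^ 2 / (N2 : ℝ)
  have hu : 0 < u := div_pos hσ1 (Nat.cast_pos.mpr hN1)
  have hv : 0 < v := div_pos hσ2 (Nat.cast_pos.mpr hN2)
  have hD : 0 < 2 + u * a + v * a :=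
    add_pos (add_pos two_pos (mul_pos hu ha)) (mul_pos hv ha)
  have huv : σ1 ^ 2 * σ2 ^ 2 / ((N1 : ℝ) * N2) = u * v := mul_div_mul_comm _ _ _ _
  have pow_four_div_sq (x y : ℝ) : x ^ 4 / y ^ 2 = (x ^ 2 / y) ^ 2 := by rw [div_pow, ← pow_mul]
  have hMSE : M1 = weightedAverageMSE u v Δ (mtaWeight 2 a u v) := by
    rw [hM1, huv, pow_four_div_sq, pow_four_div_sq, weightedAverageMSE_mtaWeight hD.ne']
  have two_mul_two : (2 * 2 : ℝ) = 4 := by norm_num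
  rwa [hMSE, weightedAverageMSE_mtaWeight_lt_iff ha hu hD, two_mul_two]
end

section
/- Let T = 2, σ_1², σ_2² > 0, N_1, N_2 ≥ 1, and Δ ≠ 0. For a ≥ 0 define M_1(a) = (σ_1²/N_1)·[T² + 2T(σ_2²/N_2)a + (σ_1²σ_2²/(N_1N_2))a² + (σ_2⁴/N_2²)a²]/(T + (σ_1²/N_1)a + (σ_2²/N_2)a)² + Δ²(σ_1⁴/N_1²)a²/(T + (σ_1²/N_1)a + (σ_2²/N_2)a)², and symmetrically M_2(a) with the roles of (σ_1², N_1) and (σ_2², N_2) interchanged, and define the risk R(a) = M_1(a) + M_2(a). Then a* = 2/Δ² minimizes R over a ∈ [0, ∞), and moreover a* = 2/Δ² also minimizes M_1 and M_2 separately. In particular the optimal task-similarity is independent of σ_1², σ_2², N_1, N_2. -/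
/-!
The MTA estimate of a task is the weighted mean `(1 - w) * Y₁ + w * Y₂` of the two sample means,
with `w` depending on the similarity `a`. Its mean squared error is a quadratic in `w` whose vertex
is `s / (s + t + D)`, and the similarity `a = T / D` produces exactly this weight. As `T / D` does
not involve the variances, the same `a` is optimal for both tasks, hence for the sum.
-/

namespace TwoTaskMTA

variable {T s t D a : ℝ}

/-- The mean squared error of `(1 - w) * Y₁ + w * Y₂` as an estimate of the mean of `Y₁`, where
`Y₁`, `Y₂` are independent sample means with variances `s`, `t` and `D` is the square of the
difference of their expectations. -/
def weightedMeanMSE (s t D w : ℝ) : ℝ :=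
  (1 - w) ^ 2 * s + w ^ 2 * (t + D)

/-- The weight that the MTA estimate of a task with sample-mean variance `s` puts on the sample mean
of the other task, of variance `t`, when the task-similarity is `a`. -/
noncomputable def crossWeight (T s t a : ℝ) : ℝ :=
  s * a / (T + (s + t) * a)

/-- The closed formula for the mean squared error of the MTA estimate of a task, as a function of
the task-similarity `a`: the task has sample-mean variance `s`, the other one `t`, and `D` is the
squared difference of the means. It has a junk value where `T + (s + t) * a = 0`. -/
noncomputable def mtaMSE (T s t D a : ℝ) : ℝ :=
  s * ((T ^ 2 + 2 * T * t * a + s * t * a ^ 2 + t ^ 2 * a ^ 2) / (T + (s + t) * a) ^ 2) +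
    D * s ^ 2 * a ^ 2 / (T + (s + t) * a) ^ 2

theorem weightedMeanMSE_eq_add_sq (h : s + t + D ≠ 0) (w : ℝ) :
    weightedMeanMSE s t D w =
      s * (t + D) / (s + t + D) + (s + t + D) * (w - s / (s + t + D)) ^ 2 := by
  unfold weightedMeanMSE
  field_simp
  ring

theorem weightedMeanMSE_div_le (h : 0 < s + t + D) (w : ℝ) :
    weightedMeanMSE s t D (s / (s + t + D)) ≤ weightedMeanMSE s t D w := by
  rw [weightedMeanMSE_eq_add_sq h.ne', weightedMeanMSE_eq_add_sq h.ne' w, sub_self,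
    zero_pow two_ne_zero, mul_zero]
  gcongr
  positivity

theorem add_add_mul_div (hD : D ≠ 0) : T + (s + t) * (T / D) = (s + t + D) * (T / D) := by
  rw [add_mul _ D, mul_div_cancel₀ T hD, add_comm]

theorem crossWeight_div (hT : T ≠ 0) (hD : D ≠ 0) :
    crossWeight T s t (T / D) = s / (s + t + D) := by
  rw [crossWeight, add_add_mul_div hD, mul_div_mul_right _ _ (div_ne_zero hT hD)]

theorem mtaMSE_eq_weightedMeanMSE (ha : T + (s + t) * a ≠ 0) :
    mtaMSE T s t D a = weightedMeanMSE s t D (crossWeight T s t a) := by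
  have one_sub_weight : 1 - crossWeight T s t a = (T + t * a) / (T + (s + t) * a) := by
    rw [crossWeight, one_sub_div ha]
    ring
  rw [weightedMeanMSE, one_sub_weight, mtaMSE, crossWeight, div_pow, div_pow]
  ring

theorem isMinOn_mtaMSE (hT : T ≠ 0) (hD : D ≠ 0) (h : 0 < s + t + D) :
    IsMinOn (mtaMSE T s t D) {a | T + (s + t) * a ≠ 0} (T / D) := by
  have optimum_mem : T + (s + t) * (T / D) ≠ 0 := by
    rw [add_add_mul_div hD]
    exact mul_ne_zero h.ne' (div_ne_zero hT hD)
  refine isMinOn_iff.mpr fun a ha ↦ ?_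
  rw [mtaMSE_eq_weightedMeanMSE optimum_mem, mtaMSE_eq_weightedMeanMSE ha, crossWeight_div hT hD]
  exact weightedMeanMSE_div_le h _

theorem mtaMSE_sq_div (T σ₁ σ₂ n₁ n₂ Δ : ℝ) :
    mtaMSE T (σ₁ ^ 2 / n₁) (σ₂ ^ 2 / n₂) (Δ ^ 2) = fun a =>
      (σ₁ ^ 2 / n₁) *
        ((T ^ 2 + 2 * T * (σ₂ ^ 2 / n₂) * a +
            (σ₁ ^ 2 * σ₂ ^ 2 / (n₁ * n₂)) * a ^ 2 +
            (σ₂ ^ 4 / n₂ ^ 2) * a ^ 2) /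
          (T + (σ₁ ^ 2 / n₁) * a + (σ₂ ^ 2 / n₂) * a) ^ 2) +
      Δ ^ 2 * (σ₁ ^ 4 / n₁ ^ 2) * a ^ 2 /
        (T + (σ₁ ^ 2 / n₁) * a + (σ₂ ^ 2 / n₂) * a) ^ 2 := by
  funext a
  unfold mtaMSE
  ring

end TwoTaskMTA

open TwoTaskMTA

theorem mta_two_task_optimal_similarity_general {T s t D : ℝ} (hT : T ≠ 0) (hD : D ≠ 0)
    (h : 0 < s + t + D) :
    IsMinOn (fun a ↦ mtaMSE T s t D a + mtaMSE T t s D a) {a | T + (s + t) * a ≠ 0} (T / D) ∧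
    IsMinOn (mtaMSE T s t D) {a | T + (s + t) * a ≠ 0} (T / D) ∧
    IsMinOn (mtaMSE T t s D) {a | T + (s + t) * a ≠ 0} (T / D) := by
  have hfirst := isMinOn_mtaMSE hT hD h
  have hsecond : IsMinOn (mtaMSE T t s D) {a | T + (s + t) * a ≠ 0} (T / D) := by
    rw [add_comm s t] at h ⊢
    exact isMinOn_mtaMSE hT hD h
  exact ⟨hfirst.add hsecond, hfirst, hsecond⟩

/-- The task-similarity `a* = 2/Δ²` minimizes the two-task risk
`R(a) = M₁(a) + M₂(a)` over `a ∈ [0, ∞)`, and moreover it also minimizes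
`M₁` and `M₂` separately (in particular the optimal similarity does not depend
on `σ₁², σ₂², N₁, N₂`). -/
theorem mta_two_task_optimal_similarity
    (σ1 σ2 : ℝ) (hσ1 : 0 < σ1 ^ 2) (hσ2 : 0 < σ2 ^ 2)
    (N1 N2 : ℕ) (hN1 : 1 ≤ N1) (hN2 : 1 ≤ N2)
    (Δ : ℝ) (hΔ : Δ ≠ 0) (T : ℝ) (hT : T = 2)
    (M1 M2 R : ℝ → ℝ)
    (hM1 : M1 = fun a =>
      (σ1 ^ 2 / (N1 : ℝ)) *
        ((T ^ 2 + 2 * T * (σ2 ^ 2 / (N2 : ℝ)) * a +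
            (σ1 ^ 2 * σ2 ^ 2 / ((N1 : ℝ) * (N2 : ℝ))) * a ^ 2 +
            (σ2 ^ 4 / (N2 : ℝ) ^ 2) * a ^ 2) /
          (T + (σ1 ^ 2 / (N1 : ℝ)) * a + (σ2 ^ 2 / (N2 : ℝ)) * a) ^ 2) +
      Δ ^ 2 * (σ1 ^ 4 / (N1 : ℝ) ^ 2) * a ^ 2 /
        (T + (σ1 ^ 2 / (N1 : ℝ)) * a + (σ2 ^ 2 / (N2 : ℝ)) * a) ^ 2)
    (hM2 : M2 = fun a =>
      (σ2 ^ 2 / (N2 : ℝ)) *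
        ((T ^ 2 + 2 * T * (σ1 ^ 2 / (N1 : ℝ)) * a +
            (σ2 ^ 2 * σ1 ^ 2 / ((N2 : ℝ) * (N1 : ℝ))) * a ^ 2 +
            (σ1 ^ 4 / (N1 : ℝ) ^ 2) * a ^ 2) /
          (T + (σ2 ^ 2 / (N2 : ℝ)) * a + (σ1 ^ 2 / (N1 : ℝ)) * a) ^ 2) +
      Δ ^ 2 * (σ2 ^ 4 / (N2 : ℝ) ^ 2) * a ^ 2 /
        (T + (σ2 ^ 2 / (N2 : ℝ)) * a + (σ1 ^ 2 / (N1 : ℝ)) * a) ^ 2)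
    (hR : R = fun a => M1 a + M2 a) :
    (∀ a, 0 ≤ a → R (2 / Δ ^ 2) ≤ R a) ∧
    (∀ a, 0 ≤ a → M1 (2 / Δ ^ 2) ≤ M1 a) ∧
    (∀ a, 0 ≤ a → M2 (2 / Δ ^ 2) ≤ M2 a) := by
  subst hT hR
  rw [← mtaMSE_sq_div] at hM1 hM2
  subst hM1 hM2
  have similarity_mem : Set.Ici 0 ⊆ {a | 2 + (σ1 ^ 2 / (N1 : ℝ) + σ2 ^ 2 / N2) * a ≠ 0} :=
    fun a (ha : 0 ≤ a) ↦ ne_of_gt (by positivity)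
  obtain ⟨hrisk, hfirst, hsecond⟩ := mta_two_task_optimal_similarity_general
    (s := σ1 ^ 2 / N1) (t := σ2 ^ 2 / N2) two_ne_zero (pow_ne_zero 2 hΔ) (by positivity)
  exact ⟨fun a ha ↦ hrisk (similarity_mem ha), fun a ha ↦ hfirst (similarity_mem ha),
    fun a ha ↦ hsecond (similarity_mem ha)⟩
end

section
/- Let T ≥ 1, let γ satisfy 0 < 1/γ ≤ 1, and let α ∈ ℝ^T satisfy α_r ≥ 0 for all r and Σ_{r=1}^T α_r = 1 − 1/γ. Then the matrix (1/γ) I + 𝟙 αᵀ is invertible and ((1/γ) I + 𝟙 αᵀ)⁻¹ = I + γ L(𝟙 αᵀ), where 𝟙 is the all-ones vector in ℝ^T and L(𝟙 αᵀ) is the graph Laplacian of the rank-one matrix 𝟙 αᵀ. Consequently, every estimator of the form Ŷ_t = (1/γ) Ȳ_t + Σ_{r=1}^T α_r Ȳ_r can be written as Ŷ = (I + Γ L(A))⁻¹ Ȳ with Γ = γ I and A = 𝟙 αᵀ a matrix with nonnegative entries, i.e. it is of MTA form. -/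
open Matrix BigOperators

/-!
With `J = 𝟙αᵀ` and `s = ∑ α_r = 1 - 1/γ` we have `J² = sJ` and `L(J) = sI - J`, and since
`1 + γs = γ` the matrix `I + γL(J)` is `γ(I - J)`. Invertibility is the one-line computation
`((1/γ)I + J)(I - J) = (1/γ)I + (1 - 1/γ)J - J² = (1/γ)I`.
-/

theorem smul_one_add_mul_one_sub {R S : Type*} [CommRing R] [Ring S] [Algebra R S]
    {c : R} {J : S} (hJ : J * J = (1 - c) • J) :
    (c • 1 + J) * (1 - J) = c • (1 : S) := by
  simp only [add_mul, mul_sub, mul_one, smul_mul_assoc, one_mul, hJ]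
  module

theorem vecMulVec_mul_self {R n : Type*} [CommSemiring R] [Fintype n] (u v : n → R) :
    vecMulVec u v * vecMulVec u v = (v ⬝ᵥ u) • vecMulVec u v := by
  rw [vecMulVec_mul_vecMulVec, vecMulVec_smul]

theorem smul_one_add_vecMulVec_mulVec {R n : Type*} [CommSemiring R] [Fintype n]
    [DecidableEq n] (c : R) (u v y : n → R) :
    (c • (1 : Matrix n n R) + vecMulVec u v) *ᵥ y = c • y + (v ⬝ᵥ y) • u := by
  rw [add_mulVec, smul_mulVec, one_mulVec, vecMulVec_mulVec, op_smul_eq_smul]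

theorem graphLaplacian_vecMulVec {T : ℕ} (u v : Fin T → ℝ) :
    graphLaplacian (vecMulVec u v) = (∑ r, v r) • diagonal u - vecMulVec u v := by
  rw [graphLaplacian, ← diagonal_smul]
  congr 2
  ext t
  simp only [vecMulVec_apply, ← Finset.mul_sum, Pi.smul_apply, smul_eq_mul, mul_comm]

theorem one_add_smul_graphLaplacian_vecMulVec_one {T : ℕ} {γ : ℝ} (hγ : γ ≠ 0)
    {α : Fin T → ℝ} (hα : ∑ r, α r = 1 - 1 / γ) :
    1 + γ • graphLaplacian (vecMulVec (fun _ => 1) α) = γ • (1 - vecMulVec (fun _ => 1) α) := by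
  rw [graphLaplacian_vecMulVec, hα, diagonal_one]
  match_scalars <;> field_simp
  ring

theorem smul_one_add_vecMulVec_one_mul_one_add_smul_graphLaplacian {T : ℕ} {γ : ℝ} (hγ : γ ≠ 0)
    {α : Fin T → ℝ} (hα : ∑ r, α r = 1 - 1 / γ) :
    ((1 / γ) • (1 : Matrix (Fin T) (Fin T) ℝ) + vecMulVec (fun _ => 1) α) *
      (1 + γ • graphLaplacian (vecMulVec (fun _ => 1) α)) = 1 := by
  have hJ : vecMulVec (fun _ : Fin T => 1) α * vecMulVec (fun _ => 1) α =
      (1 - 1 / γ) • vecMulVec (fun _ => 1) α := by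
    simp only [vecMulVec_mul_self, dotProduct, mul_one, hα]
  rw [one_add_smul_graphLaplacian_vecMulVec_one hγ hα, mul_smul_comm,
    smul_one_add_mul_one_sub hJ, smul_smul, mul_one_div_cancel hγ, one_smul]

theorem convex_regularized_estimator_is_mta_form_general {T : ℕ} {γ : ℝ} (hγ : γ ≠ 0)
    {α : Fin T → ℝ} (hα : ∑ r, α r = 1 - 1 / γ) :
    IsUnit ((1 / γ) • (1 : Matrix (Fin T) (Fin T) ℝ) +
      Matrix.vecMulVec (fun _ => (1 : ℝ)) α) ∧
    ((1 / γ) • (1 : Matrix (Fin T) (Fin T) ℝ) +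
        Matrix.vecMulVec (fun _ => (1 : ℝ)) α)⁻¹ =
      1 + γ • graphLaplacian (Matrix.vecMulVec (fun _ => (1 : ℝ)) α) ∧
    ∀ Ybar : Fin T → ℝ,
      (fun t => (1 / γ) * Ybar t + ∑ r, α r * Ybar r) =
        ((1 + (Matrix.diagonal fun _ : Fin T => γ) *
            graphLaplacian (Matrix.vecMulVec (fun _ => (1 : ℝ)) α))⁻¹).mulVec Ybar := by
  have hmul := smul_one_add_vecMulVec_one_mul_one_add_smul_graphLaplacian hγ hα
  refine ⟨.of_mul_eq_one _ hmul, inv_eq_right_inv hmul, fun Ybar => ?_⟩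
  rw [← smul_eq_diagonal_mul, inv_eq_left_inv hmul, smul_one_add_vecMulVec_mulVec]
  ext t
  simp only [Pi.add_apply, Pi.smul_apply, smul_eq_mul, mul_one, dotProduct]

/-- For `0 < 1/γ ≤ 1` and nonnegative `α` with `∑ α_r = 1 − 1/γ`, the matrix
`(1/γ)I + 𝟙αᵀ` is invertible with inverse `I + γ L(𝟙αᵀ)`; consequently every
estimator `Ŷ_t = (1/γ) Ȳ_t + ∑ r, α_r Ȳ_r` is of MTA form with `Γ = γ I` and
`A = 𝟙αᵀ`. -/
theorem convex_regularized_estimator_is_mta_form (T : ℕ) (hT : 1 ≤ T)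
    (γ : ℝ) (hγpos : 0 < 1 / γ) (hγle : 1 / γ ≤ 1)
    (α : Fin T → ℝ) (hα : ∀ r, 0 ≤ α r) (hαsum : ∑ r, α r = 1 - 1 / γ) :
    IsUnit ((1 / γ) • (1 : Matrix (Fin T) (Fin T) ℝ) +
      Matrix.vecMulVec (fun _ => (1 : ℝ)) α) ∧
    ((1 / γ) • (1 : Matrix (Fin T) (Fin T) ℝ) +
        Matrix.vecMulVec (fun _ => (1 : ℝ)) α)⁻¹ =
      1 + γ • graphLaplacian (Matrix.vecMulVec (fun _ => (1 : ℝ)) α) ∧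
    ∀ Ybar : Fin T → ℝ,
      (fun t => (1 / γ) * Ybar t + ∑ r, α r * Ybar r) =
        ((1 + (Matrix.diagonal fun _ : Fin T => γ) *
            graphLaplacian (Matrix.vecMulVec (fun _ => (1 : ℝ)) α))⁻¹).mulVec Ybar :=
  convex_regularized_estimator_is_mta_form_general (one_div_pos.mp hγpos).ne' hαsum
end

section
/- Let T ≥ 1, λ ∈ (0, 1], let N ∈ ℝ^T be a vector with positive entries N_t, and for each t let ȳ_t be the sample average of N_t values y_{ti}, so that Σ_{s=1}^T Σ_{i=1}^{N_s} y_{si} = Σ_{s=1}^T N_s ȳ_s. Then the estimator that shrinks each sample average toward the pooled mean, Ŷ_t = λ ȳ_t + (1−λ)/(Σ_{r=1}^T N_r) · Σ_{s=1}^T Σ_{i=1}^{N_s} y_{si}, satisfies Ŷ = (I + ((1−λ)/(λ Nᵀ𝟙)) L(𝟙 Nᵀ))⁻¹ ȳ, where 𝟙 is the all-ones vector and L(𝟙 Nᵀ) is the graph Laplacian of 𝟙 Nᵀ; in particular this estimator is of MTA form. -/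
open Matrix BigOperators

/-!
The matrix `P = (Nᵀ𝟙)⁻¹ 𝟙 Nᵀ`, which replaces every entry of a vector by its pooled mean, is
idempotent, and `L(𝟙 Nᵀ) = (Nᵀ𝟙) (I - P)`. Hence the matrix to be inverted acts as the identity on
the range of `P` and as the scalar `1 + (1 - λ)/λ = λ⁻¹` on the range of `I - P`. Its inverse is
therefore `P + λ (I - P) = λ I + (1 - λ) P`, which is the shrinkage estimator.
-/

theorem add_smul_one_sub_mul_add_smul_one_sub {R A : Type*} [CommSemiring R] [Ring A]
    [Algebra R A] {p : A} (hp : IsIdempotentElem p) (a b : R) :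
    (p + a • (1 - p)) * (p + b • (1 - p)) = p + (a * b) • (1 - p) := by
  simp only [add_mul, mul_add, smul_mul_assoc, mul_smul_comm, hp.eq, hp.one_sub.eq,
    hp.mul_one_sub_self, hp.one_sub_mul_self, smul_zero, add_zero, zero_add, smul_smul,
    mul_comm b a]

theorem one_add_smul_one_sub_mul_smul_one_add_smul {K A : Type*} [Field K] [Ring A] [Algebra K A]
    {p : A} (hp : IsIdempotentElem p) {c : K} (hc : c ≠ 0) :
    (1 + ((1 - c) / c) • (1 - p)) * (c • 1 + (1 - c) • p) = 1 := by
  have hleft : 1 + ((1 - c) / c) • (1 - p) = p + c⁻¹ • (1 - p) := by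
    match_scalars <;> field_simp <;> ring
  have hright : c • 1 + (1 - c) • p = p + c • (1 - p) := by module
  rw [hleft, hright, add_smul_one_sub_mul_add_smul_one_sub hp, inv_mul_cancel₀ hc, one_smul,
    add_sub_cancel]

section WeightedMean

variable {ι K : Type*} [Fintype ι] [Field K]

/-- The matrix `(∑ i, w i)⁻¹ 𝟙 wᵀ` of the operator replacing every entry of a vector by its
`w`-weighted mean. It is the zero matrix when the weights sum to zero. -/
def weightedMeanMatrix (w : ι → K) : Matrix ι ι K :=
  (∑ i, w i)⁻¹ • vecMulVec (fun _ => 1) w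

theorem weightedMeanMatrix_mulVec_apply (w y : ι → K) (i : ι) :
    (weightedMeanMatrix w *ᵥ y) i = (∑ j, w j)⁻¹ * ∑ j, w j * y j := by
  simp [weightedMeanMatrix, smul_mulVec, vecMulVec_mulVec, dotProduct]

theorem isIdempotentElem_weightedMeanMatrix {w : ι → K} (hw : ∑ i, w i ≠ 0) :
    IsIdempotentElem (weightedMeanMatrix w) := by
  have hdot : (w ⬝ᵥ fun _ => 1) = ∑ i, w i := by simp [dotProduct]
  rw [IsIdempotentElem, weightedMeanMatrix, smul_mul_smul_comm, vecMulVec_mul_vecMulVec, hdot,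
    vecMulVec_smul, smul_smul, inv_mul_cancel_right₀ hw]

theorem inv_one_add_smul_one_sub_weightedMeanMatrix [DecidableEq ι] {w : ι → K}
    (hw : ∑ i, w i ≠ 0) {c : K} (hc : c ≠ 0) :
    (1 + ((1 - c) / c) • (1 - weightedMeanMatrix w))⁻¹ =
      c • (1 : Matrix ι ι K) + (1 - c) • weightedMeanMatrix w :=
  inv_eq_right_inv <|
    one_add_smul_one_sub_mul_smul_one_add_smul (isIdempotentElem_weightedMeanMatrix hw) hc

end WeightedMean

theorem graphLaplacian_vecMulVec_one {T : ℕ} {N : Fin T → ℝ} (hN : ∑ t, N t ≠ 0) :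
    graphLaplacian (vecMulVec (fun _ => 1) N) = (∑ t, N t) • (1 - weightedMeanMatrix N) := by
  rw [weightedMeanMatrix, smul_sub, smul_inv_smul₀ hN, smul_one_eq_diagonal]
  simp [graphLaplacian, vecMulVec_apply]

theorem shrinkage_to_pooled_mean_is_mta_form_general {T : ℕ} {lam : ℝ} (hlam : lam ≠ 0)
    {N : Fin T → ℝ} (hN : ∑ t, N t ≠ 0) (ybar Yhat : Fin T → ℝ)
    (hYhat : Yhat = fun t =>
      lam * ybar t + ((1 - lam) / ∑ r, N r) * ∑ s, N s * ybar s) :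
    Yhat = ((1 + ((1 - lam) / (lam * (N ⬝ᵥ fun _ => (1 : ℝ)))) •
      graphLaplacian (vecMulVec (fun _ => (1 : ℝ)) N))⁻¹).mulVec ybar := by
  have hdot : (N ⬝ᵥ fun _ => (1 : ℝ)) = ∑ t, N t := by simp [dotProduct]
  have hscale : (1 - lam) / (lam * ∑ t, N t) * ∑ t, N t = (1 - lam) / lam := by field_simp
  rw [hdot, graphLaplacian_vecMulVec_one hN, smul_smul, hscale,
    inv_one_add_smul_one_sub_weightedMeanMatrix hN hlam, hYhat]
  ext t
  simp only [add_mulVec, smul_mulVec, one_mulVec, Pi.add_apply, Pi.smul_apply, smul_eq_mul,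
    weightedMeanMatrix_mulVec_apply]
  ring

/-- Shrinkage toward the pooled mean is of MTA form:
`Ŷ_t = λ ȳ_t + (1−λ)/(∑ N_r) ∑_s N_s ȳ_s` satisfies
`Ŷ = (I + ((1−λ)/(λ Nᵀ𝟙)) L(𝟙 Nᵀ))⁻¹ ȳ`. -/
theorem shrinkage_to_pooled_mean_is_mta_form (T : ℕ) (hT : 1 ≤ T)
    (lam : ℝ) (hlam0 : 0 < lam) (hlam1 : lam ≤ 1)
    (N : Fin T → ℝ) (hN : ∀ t, 0 < N t)
    (ybar : Fin T → ℝ)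
    (Yhat : Fin T → ℝ)
    (hYhat : Yhat = fun t =>
      lam * ybar t + ((1 - lam) / ∑ r, N r) * ∑ s, N s * ybar s) :
    Yhat = ((1 + ((1 - lam) / (lam * (N ⬝ᵥ fun _ => (1 : ℝ)))) •
      graphLaplacian (Matrix.vecMulVec (fun _ => (1 : ℝ)) N))⁻¹).mulVec ybar := by
  have hpos : 0 < ∑ t, N t := Finset.sum_pos (fun t _ => hN t) ⟨⟨0, hT⟩, Finset.mem_univ _⟩
  exact shrinkage_to_pooled_mean_is_mta_form_general hlam0.ne' hpos.ne' ybar Yhat hYhat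
end

section
/- Let T ≥ 2, let c > 0 (c = tr(Σ)/T for a positive diagonal covariance Σ), and let μ ∈ ℝ^T be non-constant (so that μᵀ L((1/T)𝟙𝟙ᵀ) μ > 0). Define the risk R(a) = [c/(ac+1)²]·(T + 2ac + (ac)²) + [(ac)²/(ac+1)²] · μᵀ L((1/T)𝟙𝟙ᵀ) μ for a ≥ 0. Then R is uniquely minimized over a ∈ [0, ∞) at a* = (T−1)/(μᵀ L((1/T)𝟙𝟙ᵀ) μ), and moreover a* = 2 / [(1/(T(T−1))) Σ_{r=1}^T Σ_{s=1}^T (μ_r − μ_s)²], which reduces to 2/Δ² when T = 2 and Δ = μ_1 − μ_2. -/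
open Matrix BigOperators

/-!
The estimator replaces `ȳ` by `(1 - w) ȳ + w · (pooled mean)` with `w = ac / (ac + 1)`, and the risk
is the convex quadratic `c + c (T - 1) (1 - w)² + Q w²` in `w`: variance orthogonal to `𝟙` against
squared bias. Completing the square, its unique minimizer is `w = c (T - 1) / (c (T - 1) + Q)`,
which is the weight of `a = (T - 1) / Q`. Since `a ↦ w` is injective off the pole `ac = -1`, this
`a` is the unique minimizer on the whole punctured line.
-/

section QuadraticForm

theorem graphLaplacian_mulVec_apply {T : ℕ} (A : Matrix (Fin T) (Fin T) ℝ) (μ : Fin T → ℝ)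
    (r : Fin T) : (graphLaplacian A *ᵥ μ) r = ∑ s, A r s * (μ r - μ s) := by
  rw [graphLaplacian, sub_mulVec, Pi.sub_apply, mulVec_diagonal]
  simp only [mulVec, dotProduct, mul_sub, Finset.sum_sub_distrib, Finset.sum_mul]

theorem dotProduct_graphLaplacian_mulVec {T : ℕ} {A : Matrix (Fin T) (Fin T) ℝ} (hA : A.IsSymm)
    (μ : Fin T → ℝ) :
    μ ⬝ᵥ graphLaplacian A *ᵥ μ = (∑ r, ∑ s, A r s * (μ r - μ s) ^ 2) / 2 := by
  have expand : μ ⬝ᵥ graphLaplacian A *ᵥ μ = ∑ r, ∑ s, A r s * (μ r * (μ r - μ s)) := by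
    simp only [dotProduct, graphLaplacian_mulVec_apply, Finset.mul_sum, mul_left_comm]
  have swap : ∑ r, ∑ s, A r s * (μ r * (μ r - μ s)) = ∑ r, ∑ s, A r s * (μ s * (μ s - μ r)) := by
    rw [Finset.sum_comm]
    simp only [hA.apply]
  have sum_sq_eq : ∑ r, ∑ s, A r s * (μ r - μ s) ^ 2 =
      ∑ r, ∑ s, A r s * (μ r * (μ r - μ s)) + ∑ r, ∑ s, A r s * (μ s * (μ s - μ r)) := by
    simp only [← Finset.sum_add_distrib]
    exact Finset.sum_congr rfl fun r _ => Finset.sum_congr rfl fun s _ => by ring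
  linarith

theorem dotProduct_graphLaplacian_average_mulVec {T : ℕ} (μ : Fin T → ℝ) :
    μ ⬝ᵥ graphLaplacian ((1 / (T : ℝ)) • vecMulVec (fun _ => 1) (fun _ => 1)) *ᵥ μ =
      (∑ r, ∑ s, (μ r - μ s) ^ 2) / (2 * T) := by
  have isSymm : ((1 / (T : ℝ)) • vecMulVec (fun _ : Fin T => (1 : ℝ)) (fun _ => 1)).IsSymm :=
    IsSymm.ext fun _ _ => rfl
  rw [dotProduct_graphLaplacian_mulVec isSymm]
  simp only [Matrix.smul_apply, vecMulVec_apply, mul_one, smul_eq_mul, ← Finset.mul_sum]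
  ring

theorem sum_sum_sub_sq_pos {ι R : Type*} [Fintype ι] [CommRing R] [LinearOrder R]
    [IsStrictOrderedRing R] {f : ι → R} (hf : ∃ i j, f i ≠ f j) :
    0 < ∑ i, ∑ j, (f i - f j) ^ 2 := by
  obtain ⟨i, j, hij⟩ := hf
  have row_pos : 0 < ∑ k, (f i - f k) ^ 2 :=
    Finset.sum_pos' (fun _ _ => sq_nonneg _)
      ⟨j, Finset.mem_univ j, sq_pos_of_ne_zero (sub_ne_zero.mpr hij)⟩
  exact Finset.sum_pos' (fun _ _ => Finset.sum_nonneg fun _ _ => sq_nonneg _)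
    ⟨i, Finset.mem_univ i, row_pos⟩

end QuadraticForm

section Risk

variable {𝕜 : Type*} [Field 𝕜]

/-- The risk `R(a)` of the constant-similarity estimator `W^smpl ȳ` of `n` means, when `ȳ` has
covariance `c I` and its mean has Laplacian quadratic form `Q`. The number of means is a scalar,
since only its value in the field matters. -/
def constantSimilarityRisk (n c Q a : 𝕜) : 𝕜 :=
  (c / (a * c + 1) ^ 2) * (n + 2 * a * c + (a * c) ^ 2) + ((a * c) ^ 2 / (a * c + 1) ^ 2) * Q

/-- The weight `w` that the constant-similarity estimator puts on the pooled mean: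
`W^smpl = (1 - w) I + w (1/T) 𝟙𝟙ᵀ`. -/
def poolingWeight (c a : 𝕜) : 𝕜 :=
  a * c / (a * c + 1)

theorem one_sub_poolingWeight {c a : 𝕜} (ha : a * c + 1 ≠ 0) :
    1 - poolingWeight c a = 1 / (a * c + 1) := by
  rw [poolingWeight, one_sub_div ha, add_sub_cancel_left]

theorem poolingWeight_inj {c a b : 𝕜} (hc : c ≠ 0) (ha : a * c + 1 ≠ 0) (hb : b * c + 1 ≠ 0) :
    poolingWeight c a = poolingWeight c b ↔ a = b := by
  rw [← sub_right_inj (a := 1), one_sub_poolingWeight ha, one_sub_poolingWeight hb, one_div,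
    one_div, _root_.inv_inj, add_left_inj, mul_left_inj' hc]

theorem poolingWeight_div {c Q : 𝕜} (hQ : Q ≠ 0) (p : 𝕜) :
    poolingWeight c (p / Q) = c * p / (c * p + Q) := by
  rw [poolingWeight, div_mul_eq_mul_div, div_add_one hQ, div_div_div_cancel_right₀ hQ, mul_comm p]

/-- Of the total variance `n c`, the part `c` along `𝟙` survives pooling and the rest is shrunk by
`(1 - w)²`; pooling costs the squared bias `w² Q`. -/
theorem constantSimilarityRisk_eq {c a : 𝕜} (ha : a * c + 1 ≠ 0) (n Q : 𝕜) :
    constantSimilarityRisk n c Q a =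
      c + (c * (n - 1) * (1 - poolingWeight c a) ^ 2 + Q * poolingWeight c a ^ 2) := by
  rw [one_sub_poolingWeight ha, constantSimilarityRisk, poolingWeight, mul_assoc 2]
  generalize a * c = x at ha
  field_simp
  ring

theorem mul_one_sub_sq_add_mul_sq {u v : 𝕜} (h : u + v ≠ 0) (w : 𝕜) :
    u * (1 - w) ^ 2 + v * w ^ 2 = u * v / (u + v) + (u + v) * (w - u / (u + v)) ^ 2 := by
  field_simp
  ring

variable [LinearOrder 𝕜] [IsStrictOrderedRing 𝕜]

theorem mul_one_sub_sq_add_mul_sq_lt {u v w : 𝕜} (h : 0 < u + v) (hw : w ≠ u / (u + v)) :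
    u * (1 - u / (u + v)) ^ 2 + v * (u / (u + v)) ^ 2 < u * (1 - w) ^ 2 + v * w ^ 2 := by
  have gap_pos : 0 < (u + v) * (w - u / (u + v)) ^ 2 :=
    mul_pos h (sq_pos_of_ne_zero (sub_ne_zero.mpr hw))
  rw [mul_one_sub_sq_add_mul_sq h.ne', mul_one_sub_sq_add_mul_sq h.ne' w]
  simpa using gap_pos

theorem constantSimilarityRisk_lt {n c Q a : 𝕜} (hc : c ≠ 0) (hQ : Q ≠ 0)
    (h : 0 < c * (n - 1) + Q) (ha : a * c + 1 ≠ 0) (hne : a ≠ (n - 1) / Q) :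
    constantSimilarityRisk n c Q ((n - 1) / Q) < constantSimilarityRisk n c Q a := by
  have hopt : (n - 1) / Q * c + 1 ≠ 0 := by
    rw [div_mul_eq_mul_div, div_add_one hQ, mul_comm]
    exact div_ne_zero h.ne' hQ
  have weight_ne : poolingWeight c a ≠ c * (n - 1) / (c * (n - 1) + Q) := by
    rwa [← poolingWeight_div hQ, Ne, poolingWeight_inj hc ha hopt]
  rw [constantSimilarityRisk_eq hopt, constantSimilarityRisk_eq ha, poolingWeight_div hQ]
  gcongr c + ?_
  exact mul_one_sub_sq_add_mul_sq_lt h weight_ne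

end Risk

theorem constant_mta_optimal_similarity_general {T : ℕ} {c : ℝ} (hc : 0 < c)
    {μ : Fin T → ℝ} (hμ : ∃ r s, μ r ≠ μ s) {Q : ℝ}
    (hQ : Q = μ ⬝ᵥ
      graphLaplacian ((1 / (T : ℝ)) • vecMulVec (fun _ => 1) (fun _ => 1)) *ᵥ μ)
    {aStar : ℝ} (haStar : aStar = ((T : ℝ) - 1) / Q) :
    0 < aStar ∧
      (∀ a, a * c + 1 ≠ 0 → a ≠ aStar →
        constantSimilarityRisk (T : ℝ) c Q aStar < constantSimilarityRisk (T : ℝ) c Q a) ∧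
      aStar = 2 / ((1 / ((T : ℝ) * ((T : ℝ) - 1))) * ∑ r, ∑ s, (μ r - μ s) ^ 2) := by
  have hT : 2 ≤ T := by
    obtain ⟨r, s, hrs⟩ := hμ
    exact Fin.nontrivial_iff_two_le.mp ⟨r, s, ne_of_apply_ne μ hrs⟩
  have T_pos : (0 : ℝ) < T := by positivity
  have T_sub_one_pos : (0 : ℝ) < T - 1 := sub_pos.mpr (by exact_mod_cast hT)
  have sum_pos := sum_sum_sub_sq_pos hμ
  rw [dotProduct_graphLaplacian_average_mulVec] at hQ
  have Q_pos : 0 < Q := by rw [hQ]; positivity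
  refine ⟨by rw [haStar]; positivity, fun a ha hne => ?_, ?_⟩
  · subst haStar
    exact constantSimilarityRisk_lt hc.ne' Q_pos.ne' (by positivity) ha hne
  · rw [haStar, hQ]
    field_simp

/-- The constant-similarity risk
`R(a) = (c/(ac+1)²)(T + 2ac + (ac)²) + ((ac)²/(ac+1)²) μᵀL((1/T)𝟙𝟙ᵀ)μ`
is uniquely minimized over `a ∈ [0,∞)` at `a* = (T−1)/(μᵀL((1/T)𝟙𝟙ᵀ)μ)`, and
`a* = 2/((1/(T(T−1))) ∑ᵣ∑ₛ (μᵣ−μₛ)²)` (which is `2/Δ²` when `T = 2`). -/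
theorem constant_mta_optimal_similarity (T : ℕ) (hT : 2 ≤ T)
    (c : ℝ) (hc : 0 < c)
    (μ : Fin T → ℝ) (hμ : ∃ r s, μ r ≠ μ s)
    (Q : ℝ)
    (hQ : Q = μ ⬝ᵥ (graphLaplacian
      ((1 / (T : ℝ)) • Matrix.vecMulVec (fun _ => (1 : ℝ)) (fun _ => (1 : ℝ)))).mulVec μ)
    (R : ℝ → ℝ)
    (hR : R = fun a =>
      (c / (a * c + 1) ^ 2) * ((T : ℝ) + 2 * a * c + (a * c) ^ 2) +
        ((a * c) ^ 2 / (a * c + 1) ^ 2) * Q)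
    (aStar : ℝ) (haStar : aStar = ((T : ℝ) - 1) / Q) :
    (∀ a, 0 ≤ a → a ≠ aStar → R aStar < R a) ∧
    aStar = 2 / ((1 / ((T : ℝ) * ((T : ℝ) - 1))) * ∑ r, ∑ s, (μ r - μ s) ^ 2) := by
  subst hR
  obtain ⟨-, risk_lt, aStar_eq⟩ := constant_mta_optimal_similarity_general hc hμ hQ haStar
  exact ⟨fun a ha => risk_lt a (by positivity), aStar_eq⟩
end
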